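/- Let X = X_{a,b} be the Bourgain–Delbaen space. Then for every ε > 0 the ε-Szlenk index of the unit ball of X^* is finite: η(ε, B_{X^*}) < ω. -/

import Mathlib

open MeasureTheory Set Ordinal Filter
open scoped Classical

/-- `ℓ∞ = ℓ∞(ℕ)`. -/
noncomputable abbrev linf : Type := lp (fun _ : ℕ => ℝ) ⊤

/-- The `k`-th coordinate functional `e_k^*` on `ℓ∞`. -/
noncomputable def coordFn (k : ℕ) : linf →L[ℝ] ℝ :=
  LinearMap.mkContinuous
    { toFun := fun x => x k
      map_add' := fun _ _ => rfl
      map_smul' := fun _ _ => rfl }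
    1 (fun x => by
      rw [one_mul]
      exact lp.norm_apply_le_norm (E := fun _ : ℕ => ℝ) ENNReal.top_ne_zero x k)

/-- The `k`-th coordinate vector `e_k` of `ℓ∞`. -/
noncomputable def ek (k : ℕ) : linf := lp.single ⊤ k (1 : ℝ)

/-- `E_n = span{e_k : 1 ≤ k ≤ d n}`. -/
noncomputable def Esub (d : ℕ → ℕ) (n : ℕ) : Submodule ℝ linf :=
  Submodule.span ℝ {x : linf | ∃ k : ℕ, 1 ≤ k ∧ k ≤ d n ∧ x = ek k}

/-- All the data of the Bourgain–Delbaen construction: the constants `a`, `b`, `λ`, the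
dimensions `d n`, the enumeration `φ` of tuples `(σ',i,m,σ'',j)`, the coordinate projections
`π_m`, the embeddings `i_{m,n}` and the limit projections `P_m`, together with their defining
properties. -/
structure BDSetup where
  a : ℝ
  b : ℝ
  lam : ℝ
  hb : 0 < b
  hba : b < a
  ha : a < 1
  hlam : 1 < lam
  hineq : a + 2 * b * lam < lam
  /-- the dimensions -/
  d : ℕ → ℕ
  hd1 : d 1 = 1
  hd2 : d 2 = 2
  /-- the enumeration of the tuples `(σ', i, m, σ'', j)` -/
  φ : ℕ → ℤ × ℕ × ℕ × ℤ × ℕ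
  hφ : ∀ n : ℕ, 2 ≤ n → Set.BijOn φ {k : ℕ | d n < k ∧ k ≤ d (n + 1)}
      {q : ℤ × ℕ × ℕ × ℤ × ℕ | (q.1 = 1 ∨ q.1 = -1) ∧ (q.2.2.2.1 = 1 ∨ q.2.2.2.1 = -1) ∧
        1 ≤ q.2.2.1 ∧ q.2.2.1 < n ∧ 1 ≤ q.2.1 ∧ q.2.1 ≤ d q.2.2.1 ∧
        1 ≤ q.2.2.2.2 ∧ q.2.2.2.2 ≤ d n}
  /-- the coordinate projections `π_m` -/
  pi : ℕ → (linf →L[ℝ] linf)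
  hpi : ∀ (m : ℕ) (x : linf) (k : ℕ), pi m x k = if 1 ≤ k ∧ k ≤ d m then x k else 0
  /-- the embeddings `i_{m,n}` -/
  iMap : ℕ → ℕ → (linf →L[ℝ] linf)
  hi12 : ∀ x : linf, x ∈ Esub d 1 → iMap 1 2 x = x
  histep : ∀ n : ℕ, 2 ≤ n → ∀ x : linf, x ∈ Esub d n →
    iMap n (n + 1) x = x + ∑ k ∈ Finset.Ioc (d n) (d (n + 1)),
      (a * ((φ k).1 : ℝ) * x (φ k).2.1 +
        b * (((φ k).2.2.2.1 : ℤ) : ℝ) *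
          ((x - iMap (φ k).2.2.1 n (pi (φ k).2.2.1 x)) (φ k).2.2.2.2)) • ek k
  hicomp : ∀ m n : ℕ, 1 ≤ m → m < n → ∀ x : linf, x ∈ Esub d m →
    iMap m (n + 1) x = iMap n (n + 1) (iMap m n x)
  hinorm : ∀ m n : ℕ, 1 ≤ m → m < n → ∀ x : linf, x ∈ Esub d m → ‖iMap m n x‖ ≤ lam * ‖x‖
  /-- the coordinatewise limit projections `P_m` -/
  P : ℕ → (linf →L[ℝ] linf)
  hP0 : P 0 = 0
  hPlim : ∀ m : ℕ, 1 ≤ m → ∀ (x : linf) (k : ℕ),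
    Filter.Tendsto (fun n => (iMap m n (pi m x)) k) Filter.atTop (nhds (P m x k))
  hPproj : ∀ m : ℕ, (P m).comp (P m) = P m
  hPnorm : ∀ m : ℕ, ‖P m‖ ≤ lam

/-- The Bourgain–Delbaen space `X = X_{a,b}`, the closed linear span of `⋃ m, P_m(E_m)`. -/
noncomputable def Xsub (S : BDSetup) : Submodule ℝ linf :=
  (Submodule.span ℝ (⋃ m ∈ {m : ℕ | 1 ≤ m}, (S.P m) '' (Esub S.d m))).topologicalClosure

/-- The restriction (quotient) map `Q : ℓ∞^* → X^*`. -/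
noncomputable def QMap (S : BDSetup) (f : linf →L[ℝ] ℝ) : (Xsub S) →L[ℝ] ℝ :=
  f.comp (Xsub S).subtypeL

/-- The images `Q e_k^*` of the coordinate functionals in `X^*`. -/
noncomputable def Qe (S : BDSetup) (k : ℕ) : (Xsub S) →L[ℝ] ℝ := QMap S (coordFn k)

/-- The Szlenk sets `P_α(ε, B)` of a subset `B` of the dual of `Y`:
`P₀ = B`; `b ∈ P_{α+1}` iff `b ∈ B` and `b` is the weak* limit of a sequence in `P_α` whose
evaluations along some weakly null sequence of the unit ball of `Y` converge to a limit `≥ ε`;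
intersections are taken at limit ordinals. -/
noncomputable def SzlenkSet (Y : Type*) [NormedAddCommGroup Y] [NormedSpace ℝ Y]
    (ε : ℝ) (B : Set (Y →L[ℝ] ℝ)) : Ordinal → Set (Y →L[ℝ] ℝ) :=
  fun α => Ordinal.limitRecOn α B
    (fun _ prev => {b | b ∈ B ∧ ∃ (a : ℕ → Y) (bs : ℕ → Y →L[ℝ] ℝ),
      (∀ n, ‖a n‖ ≤ 1) ∧
      (∀ F : Y →L[ℝ] ℝ, Filter.Tendsto (fun n => F (a n)) Filter.atTop (nhds (0 : ℝ))) ∧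
      (∀ n, bs n ∈ prev) ∧
      (∀ y : Y, Filter.Tendsto (fun n => bs n y) Filter.atTop (nhds (b y))) ∧
      (∃ L : ℝ, ε ≤ L ∧ Filter.Tendsto (fun n => bs n (a n)) Filter.atTop (nhds L))})
    (fun β _ ih => ⋂ (γ : Ordinal) (h : γ < β), ih γ h)

theorem BD_mem_Esub {d : ℕ → ℕ} {n : ℕ} (x : linf) :
    x ∈ Esub d n ↔ ∀ k, ¬ (1 ≤ k ∧ k ≤ d n) → x k = 0 := by
  constructor
  · intro hx k hk
    unfold Esub at hx
    induction hx using Submodule.span_induction with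
    | mem y hy =>
      obtain ⟨l, h1, h2, rfl⟩ := hy
      have : k ≠ l := by rintro rfl; exact hk ⟨h1, h2⟩
      simp [ek, lp.single_apply, this]
    | zero => simp
    | add y z _ _ h1 h2 => simp [h1, h2]
    | smul c y _ h => simp [h]
  · intro h
    have : x = ∑ k ∈ Finset.Icc 1 (d n), x k • ek k := by
      apply lp.ext
      funext j
      rw [lp.coeFn_sum, Finset.sum_apply]
      have h1 : ∀ k ∈ Finset.Icc 1 (d n), (x k • ek k : linf) j = if j = k then x k else 0 := by
        intro k _
        by_cases hjk : j = k
        · subst hjk; simp [ek, lp.single_apply]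
        · simp [ek, lp.single_apply, hjk]
      rw [Finset.sum_congr rfl h1, Finset.sum_ite_eq]
      split_ifs with h2
      · rfl
      · exact h j (by simpa using h2)
    rw [this]
    refine Submodule.sum_mem _ fun k hk => Submodule.smul_mem _ _ (Submodule.subset_span ?_)
    rw [Finset.mem_Icc] at hk
    exact ⟨k, hk.1, hk.2, rfl⟩

theorem BD_d_pos (S : BDSetup) (n : ℕ) (hn : 1 ≤ n) : 1 ≤ S.d n ∧ S.d n < S.d (n + 1) := by
  induction n, hn using Nat.le_induction with
  | base => simp [S.hd1, S.hd2]
  | succ n hn ih =>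
    have h1 : 1 ≤ S.d (n + 1) := by omega
    refine ⟨h1, ?_⟩
    have := (S.hφ (n + 1) (by omega)).surjOn
    have hq : ((1, 1, 1, 1, 1) : ℤ × ℕ × ℕ × ℤ × ℕ) ∈
      {q : ℤ × ℕ × ℕ × ℤ × ℕ | (q.1 = 1 ∨ q.1 = -1) ∧ (q.2.2.2.1 = 1 ∨ q.2.2.2.1 = -1) ∧
        1 ≤ q.2.2.1 ∧ q.2.2.1 < n + 1 ∧ 1 ≤ q.2.1 ∧ q.2.1 ≤ S.d q.2.2.1 ∧
        1 ≤ q.2.2.2.2 ∧ q.2.2.2.2 ≤ S.d (n + 1)} := by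
      simp [S.hd1]; omega
    obtain ⟨k, hk, -⟩ := this hq
    exact lt_of_lt_of_le hk.1 hk.2

theorem BD_d_mono (S : BDSetup) {m n : ℕ} (hm : 1 ≤ m) (h : m ≤ n) : S.d m ≤ S.d n := by
  induction n, h using Nat.le_induction with
  | base => exact le_rfl
  | succ n hn ih => exact ih.trans (BD_d_pos S n (by omega)).2.le

theorem BD_d_ge (S : BDSetup) (n : ℕ) (hn : 1 ≤ n) : n ≤ S.d n := by
  induction n, hn using Nat.le_induction with
  | base => simp [S.hd1]
  | succ n hn ih => have := (BD_d_pos S n hn).2; omega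

theorem BD_pi_mem (S : BDSetup) (m : ℕ) (x : linf) : S.pi m x ∈ Esub S.d m := by
  rw [BD_mem_Esub]
  intro k hk
  rw [S.hpi, if_neg hk]

theorem BD_pi_congr (S : BDSetup) (m : ℕ) (x y : linf)
    (h : ∀ k, 1 ≤ k → k ≤ S.d m → x k = y k) : S.pi m x = S.pi m y := by
  apply lp.ext
  funext k
  rw [S.hpi, S.hpi]
  split_ifs with hk
  · exact h k hk.1 hk.2
  · rfl

theorem BD_pi_zero (S : BDSetup) (m : ℕ) (x : linf)
    (h : ∀ k, 1 ≤ k → k ≤ S.d m → x k = 0) : S.pi m x = 0 := by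
  rw [← map_zero (S.pi m)]
  exact BD_pi_congr S m x 0 (fun k h1 h2 => by simp [h k h1 h2])

theorem BD_pi_self (S : BDSetup) (m : ℕ) (x : linf) (hx : x ∈ Esub S.d m) : S.pi m x = x := by
  apply lp.ext
  funext k
  rw [S.hpi]
  split_ifs with hk
  · rfl
  · exact ((BD_mem_Esub x).1 hx k hk).symm

/-- the coordinates of the sum in `histep` -/
theorem BD_sum_coord (A B : ℕ) (c : ℕ → ℝ) (j : ℕ) :
    (∑ k ∈ Finset.Ioc A B, c k • ek k : linf) j = if A < j ∧ j ≤ B then c j else 0 := by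
  rw [lp.coeFn_sum, Finset.sum_apply]
  have h1 : ∀ k ∈ Finset.Ioc A B, (c k • ek k : linf) j = if j = k then c k else 0 := by
    intro k _
    by_cases hjk : j = k
    · subst hjk; simp [ek, lp.single_apply]
    · simp [ek, lp.single_apply, hjk]
  rw [Finset.sum_congr rfl h1, Finset.sum_ite_eq]
  simp

theorem BD_step (S : BDSetup) (n : ℕ) (hn : 1 ≤ n) (x : linf) (hx : x ∈ Esub S.d n) :
    S.iMap n (n + 1) x ∈ Esub S.d (n + 1) ∧ ∀ k, k ≤ S.d n → S.iMap n (n + 1) x k = x k := by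
  have hx' := (BD_mem_Esub x).1 hx
  have hd := (BD_d_pos S n hn).2
  rcases Nat.eq_or_lt_of_le hn with rfl | hn2
  · rw [S.hi12 x hx]
    refine ⟨?_, fun _ _ => rfl⟩
    rw [BD_mem_Esub]
    intro k hk
    exact hx' k (by omega)
  · rw [S.histep n hn2 x hx]
    constructor
    · rw [BD_mem_Esub]
      intro k hk
      rw [lp.coeFn_add, Pi.add_apply, BD_sum_coord, if_neg (by omega), hx' k (by omega), add_zero]
    · intro k hk
      rw [lp.coeFn_add, Pi.add_apply, BD_sum_coord, if_neg (by omega), add_zero]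

theorem BD_iMap_mem (S : BDSetup) (m n : ℕ) (hm : 1 ≤ m) (hmn : m < n) (x : linf)
    (hx : x ∈ Esub S.d m) :
    S.iMap m n x ∈ Esub S.d n ∧ ∀ k, k ≤ S.d m → S.iMap m n x k = x k := by
  induction n, hmn using Nat.le_induction with
  | base => exact BD_step S m hm x hx
  | succ n hn ih =>
    have hmn : m < n := hn
    rw [S.hicomp m n hm hmn x hx]
    have h := BD_step S n (by omega) _ ih.1
    refine ⟨h.1, fun k hk => ?_⟩
    rw [h.2 k (hk.trans (BD_d_mono S hm hmn.le)), ih.2 k hk]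

theorem BD_iMap_stable (S : BDSetup) (m n n' : ℕ) (hm : 1 ≤ m) (hmn : m < n) (hn : n ≤ n') (x : linf)
    (hx : x ∈ Esub S.d m) (k : ℕ) (hk : k ≤ S.d n) : S.iMap m n' x k = S.iMap m n x k := by
  induction n', hn using Nat.le_induction with
  | base => rfl
  | succ n' hn' ih =>
    rw [S.hicomp m n' hm (by omega) x hx,
      (BD_step S n' (by omega) _ (BD_iMap_mem S m n' hm (by omega) x hx).1).2 k
        (hk.trans (BD_d_mono S (by omega) hn')), ih]

theorem BD_iMap_comp (S : BDSetup) (q m n : ℕ) (hq : 1 ≤ q) (hqm : q < m) (hmn : m < n) (x : linf)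
    (hx : x ∈ Esub S.d q) : S.iMap q n x = S.iMap m n (S.iMap q m x) := by
  induction n, hmn using Nat.le_induction with
  | base => exact S.hicomp q m hq hqm x hx
  | succ n hn ih =>
    have hmn : m < n := hn
    rw [S.hicomp q n hq (by omega) x hx, ih,
      S.hicomp m n (by omega) hmn _ (BD_iMap_mem S q m hq hqm x hx).1]

theorem BD_P_coord (S : BDSetup) (m n : ℕ) (hm : 1 ≤ m) (hmn : m < n) (x : linf) (k : ℕ)
    (hk : k ≤ S.d n) : S.P m x k = S.iMap m n (S.pi m x) k := by
  refine tendsto_nhds_unique (S.hPlim m hm x k) ?_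
  refine tendsto_const_nhds.congr' ?_
  filter_upwards [eventually_ge_atTop n] with n' hn'
  exact (BD_iMap_stable S m n n' hm hmn hn' _ (BD_pi_mem S m x) k hk).symm

theorem BD_P_low (S : BDSetup) (m : ℕ) (hm : 1 ≤ m) (x : linf) (k : ℕ) (h1 : 1 ≤ k)
    (hk : k ≤ S.d m) : S.P m x k = x k := by
  rw [BD_P_coord S m (m + 1) hm (by omega) x k (hk.trans (BD_d_mono S hm (by omega))),
    (BD_iMap_mem S m (m + 1) hm (by omega) _ (BD_pi_mem S m x)).2 k hk, S.hpi, if_pos ⟨h1, hk⟩]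

theorem BD_P_at_zero (S : BDSetup) (m : ℕ) (hm : 1 ≤ m) (x : linf) : S.P m x 0 = 0 := by
  rw [BD_P_coord S m (m + 1) hm (by omega) x 0 (Nat.zero_le _)]
  exact (BD_mem_Esub _).1 (BD_iMap_mem S m (m + 1) hm (by omega) _ (BD_pi_mem S m x)).1 0 (by omega)

theorem BD_P_congr (S : BDSetup) (m : ℕ) (hm : 1 ≤ m) (x y : linf) (h : S.pi m x = S.pi m y) :
    S.P m x = S.P m y := by
  apply lp.ext
  funext k
  exact tendsto_nhds_unique (S.hPlim m hm x k) (h ▸ S.hPlim m hm y k)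

theorem BD_P_eq_zero (S : BDSetup) (m : ℕ) (hm : 1 ≤ m) (x : linf)
    (h : ∀ k, 1 ≤ k → k ≤ S.d m → x k = 0) : S.P m x = 0 := by
  rw [BD_P_congr S m hm x 0 (by rw [BD_pi_zero S m x h, map_zero]), map_zero]

theorem BD_P_P (S : BDSetup) (q m : ℕ) (hq : 1 ≤ q) (hqm : q ≤ m) (x : linf) :
    S.P m (S.P q x) = S.P q x := by
  rcases Nat.eq_or_lt_of_le hqm with rfl | hqm
  · exact congrArg (fun f => f x) (S.hPproj q)
  · have hz := BD_iMap_mem S q m hq hqm _ (BD_pi_mem S q x)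
    have hpi : S.pi m (S.P q x) = S.iMap q m (S.pi q x) := by
      rw [← BD_pi_self S m _ hz.1]
      exact BD_pi_congr S m _ _ fun k h1 h2 => BD_P_coord S q m hq hqm x k h2
    apply lp.ext
    funext k
    refine tendsto_nhds_unique (S.hPlim m (by omega) (S.P q x) k) ?_
    refine (S.hPlim q hq x k).congr' ?_
    filter_upwards [eventually_gt_atTop m] with n hn
    rw [hpi, BD_iMap_comp S q m n hq hqm hn _ (BD_pi_mem S q x)]

/-- the recursion formula for the coordinates of vectors fixed by `P_n` -/
theorem BD_formula (S : BDSetup) (n : ℕ) (hn : 2 ≤ n) (y : linf) (hy : S.P n y = y) (k : ℕ)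
    (hk1 : S.d n < k) (hk2 : k ≤ S.d (n + 1)) :
    ∃ (s1 s2 : ℝ) (i m j : ℕ), |s1| = 1 ∧ |s2| = 1 ∧ 1 ≤ m ∧ i ≤ S.d m ∧
      y k = S.a * s1 * y i + S.b * s2 * (y j - S.P m y j) := by
  obtain ⟨h1, h2, hm1, hmn, hi1, hi2, hj1, hj2⟩ := (S.hφ n hn).mapsTo (show k ∈ _ from ⟨hk1, hk2⟩)
  refine ⟨((S.φ k).1 : ℝ), (((S.φ k).2.2.2.1 : ℤ) : ℝ), (S.φ k).2.1, (S.φ k).2.2.1,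
    (S.φ k).2.2.2.2, ?_, ?_, hm1, hi2, ?_⟩
  · rcases h1 with h | h <;> simp [h]
  · rcases h2 with h | h <;> simp [h]
  have hz := BD_pi_mem S n y
  have e1 : y k = S.iMap n (n + 1) (S.pi n y) k := by
    rw [← BD_P_coord S n (n + 1) (by omega) (by omega) y k hk2, hy]
  have e2 : S.pi (S.φ k).2.2.1 (S.pi n y) = S.pi (S.φ k).2.2.1 y := by
    refine BD_pi_congr S _ _ _ fun l hl1 hl2 => ?_
    rw [S.hpi, if_pos ⟨hl1, hl2.trans (BD_d_mono S hm1 hmn.le)⟩]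
  rw [e1, S.histep n hn _ hz, lp.coeFn_add, Pi.add_apply, BD_sum_coord, if_pos ⟨hk1, hk2⟩, e2,
    (BD_mem_Esub _).1 hz k (by omega), zero_add, lp.coeFn_sub, Pi.sub_apply,
    S.hpi n y, S.hpi n y, if_pos ⟨hi1, hi2.trans (BD_d_mono S hm1 hmn.le)⟩, if_pos ⟨hj1, hj2⟩,
    BD_P_coord S _ n hm1 hmn y _ hj2]

/-- block sequences -/
structure BDBlocks (S : BDSetup) (R : ℝ) (p0 : ℕ) (x : ℕ → linf) (p q : ℕ → ℕ) : Prop where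
  h0 : p0 ≤ p 0
  hpq : ∀ i, p i < q i
  hqp : ∀ i, q i ≤ p (i + 1)
  hP : ∀ i, S.P (q i) (x i) = x i
  hlow : ∀ i k, k ≤ S.d (p i) → x i k = 0
  hnorm : ∀ i, ‖x i‖ ≤ R

theorem BD_cut (p : ℕ → ℕ) (hp : StrictMono p) (m u v : ℕ) (huv : u ≤ v) :
    ∃ t, u ≤ t ∧ t ≤ v ∧ (∀ s, s < t → u ≤ s → p s ≤ m) ∧ ∀ s, t ≤ s → s < v → m < p s := by
  induction v, huv using Nat.le_induction with
  | base => exact ⟨u, le_rfl, le_rfl, fun s h1 h2 => by omega, fun s h1 h2 => by omega⟩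
  | succ v hv ih =>
    by_cases h : p v ≤ m
    · exact ⟨v + 1, by omega, le_rfl, fun s h1 _ => (hp.monotone (by omega)).trans h,
        fun s h1 h2 => by omega⟩
    · obtain ⟨t, h1, h2, h3, h4⟩ := ih
      refine ⟨t, h1, by omega, h3, fun s hs1 hs2 => ?_⟩
      rcases Nat.lt_succ_iff_lt_or_eq.1 hs2 with h5 | rfl
      · exact h4 s hs1 h5
      · omega

theorem BD_rank (S : BDSetup) (k : ℕ) (hk : S.d 2 < k) :
    ∃ n, 2 ≤ n ∧ S.d n < k ∧ k ≤ S.d (n + 1) := by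
  by_contra! hcon
  have : ∀ n, 2 ≤ n → S.d n < k := by
    intro n hn
    induction n, hn using Nat.le_induction with
    | base => exact hk
    | succ n hn ih => exact hcon n hn ih
  have h1 := this (k + 2) (by omega)
  have h2 := BD_d_ge S (k + 2) (by omega)
  omega

theorem BD_coord_le (x : linf) (k : ℕ) : |x k| ≤ ‖x‖ :=
  lp.norm_apply_le_norm (E := fun _ : ℕ => ℝ) ENNReal.top_ne_zero x k

theorem BD_sum_apply (x : ℕ → linf) (F : Finset ℕ) (k : ℕ) :
    (∑ i ∈ F, x i) k = ∑ i ∈ F, x i k := by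
  rw [lp.coeFn_sum, Finset.sum_apply]

theorem BD_holder (a b : ℝ) (ha0 : 0 < a) (ha : a < 1) (hb0 : 0 < b) (hb : b < 1) :
    ∃ s θ : ℝ, 0 < s ∧ s < 1 ∧ 0 < θ ∧ θ < 1 ∧
      ∀ A B : ℝ, 0 ≤ A → 0 ≤ B → a * A ^ s + b * B ^ s ≤ θ * (A + B) ^ s := by
  obtain ⟨n, hn⟩ : ∃ n : ℕ, a ^ (n + 2) + b ^ (n + 2) < 1 := by
    have h1 := tendsto_pow_atTop_nhds_zero_of_lt_one ha0.le ha
    have h2 := tendsto_pow_atTop_nhds_zero_of_lt_one hb0.le hb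
    have h3 := ((h1.add h2).comp (tendsto_add_atTop_nat 2)).eventually
      (gt_mem_nhds (show (0:ℝ) + 0 < 1 by norm_num))
    exact h3.exists
  set q : ℝ := (n : ℝ) + 2 with hq
  have hq2 : 1 < q := by have : (0:ℝ) ≤ n := n.cast_nonneg; linarith
  have hpq : q.HolderConjugate (q.conjExponent) := Real.HolderConjugate.conjExponent hq2
  set p := q.conjExponent with hp
  have hp1 : 1 < p := hpq.symm.lt
  have hp0 : 0 < p := by linarith
  have haq : a ^ q = a ^ (n + 2) := by
    rw [hq, ← Real.rpow_natCast]; push_cast; rfl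
  have hbq : b ^ q = b ^ (n + 2) := by
    rw [hq, ← Real.rpow_natCast]; push_cast; rfl
  have hpos : 0 < a ^ (n + 2) + b ^ (n + 2) := by positivity
  refine ⟨1 / p, (a ^ (n + 2) + b ^ (n + 2)) ^ (1 / q), by positivity,
    by rw [div_lt_one hp0]; exact hp1, by positivity, 
    Real.rpow_lt_one hpos.le hn (by positivity), fun A B hA hB => ?_⟩
  have := Real.inner_le_Lp_mul_Lq (Finset.univ : Finset (Fin 2)) ![a, b]
    ![A ^ (1 / p), B ^ (1 / p)] hpq
  simp only [Fin.sum_univ_two, Matrix.cons_val_zero, Matrix.cons_val_one] at this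
  rw [abs_of_pos ha0, abs_of_pos hb0, abs_of_nonneg (by positivity : 0 ≤ A ^ (1 / p)),
    abs_of_nonneg (by positivity : 0 ≤ B ^ (1 / p)), haq, hbq, ← Real.rpow_mul hA,
    ← Real.rpow_mul hB, one_div_mul_cancel hp0.ne', Real.rpow_one, Real.rpow_one] at this
  exact this

theorem BD_estimate (S : BDSetup) (R : ℝ) (hR : 0 ≤ R) :
    ∃ s C : ℝ, 0 < s ∧ s < 1 ∧ 0 ≤ C ∧ ∀ (x : ℕ → linf) (p q : ℕ → ℕ), BDBlocks S R 2 x p q →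
      ∀ N u k : ℕ, |(∑ i ∈ Finset.Ico u (u + N), x i) k| ≤ C * (N : ℝ) ^ s := by
  have hb0 := S.hb
  have ha0 : 0 < S.a := hb0.trans S.hba
  have hb1 : S.b < 1 := S.hba.trans S.ha
  have hl := S.hlam
  obtain ⟨s, θ, hs0, hs1, hθ0, hθ1, hH⟩ := BD_holder S.a S.b ha0 S.ha hb0 hb1
  set K : ℝ := R + S.b * ((1 + S.lam) * R) with hK
  have hK0 : 0 ≤ K := by positivity
  have hC0 : 0 ≤ K / (1 - θ) := div_nonneg hK0 (by linarith)
  refine ⟨s, K / (1 - θ), hs0, hs1, hC0, ?_⟩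
  intro x p q hB
  set C := K / (1 - θ) with hC
  have hCK : K = (1 - θ) * C := by rw [hC]; field_simp [(by linarith : 1 - θ ≠ 0)]
  have hpm : StrictMono p := strictMono_nat_of_lt_succ fun i => (hB.hpq i).trans_le (hB.hqp i)
  have hp2 : ∀ i, 2 ≤ p i := fun i => hB.h0.trans (hpm.monotone (Nat.zero_le i))
  have hqp : ∀ i j, i < j → q i ≤ p j := fun i j h => (hB.hqp i).trans (hpm.monotone h)
  have hlow : ∀ i n k, k ≤ S.d n → 1 ≤ n → n ≤ p i → x i k = 0 := fun i n k h1 h2 h3 =>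
    hB.hlow i k (h1.trans (BD_d_mono S h2 h3))
  have hfix : ∀ i n, q i ≤ n → S.P n (x i) = x i := by
    intro i n h
    have h1 := hB.hpq i
    have h2 := BD_P_P S (q i) n (by omega) h (x i)
    rwa [hB.hP i] at h2
  intro N
  induction N using Nat.strong_induction_on with
  | _ N ih =>
  intro u k
  have hnn : 0 ≤ C * (N : ℝ) ^ s := by positivity
  rcases Nat.lt_or_ge (S.d 2) k with hk | hk
  swap
  · rw [BD_sum_apply, Finset.sum_eq_zero fun i _ => hlow i 2 k hk (by norm_num) (hp2 i), abs_zero]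
    exact hnn
  obtain ⟨n, hn2, hk1, hk2⟩ := BD_rank S k hk
  obtain ⟨r', hr1, hr2, hr3, hr4⟩ := BD_cut p hpm n u (u + N) (by omega)
  have hsplit : (∑ i ∈ Finset.Ico u (u + N), x i) k = (∑ i ∈ Finset.Ico u r', x i) k := by
    rw [BD_sum_apply, BD_sum_apply, ← Finset.sum_Ico_consecutive _ hr1 hr2, add_eq_left]
    refine Finset.sum_eq_zero fun i hi => ?_
    rw [Finset.mem_Ico] at hi
    exact hlow i (n + 1) k hk2 (by omega) (hr4 i hi.1 hi.2)
  rw [hsplit]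
  rcases Nat.eq_or_lt_of_le hr1 with rfl | hur
  · simpa using hnn
  obtain ⟨r, rfl⟩ : ∃ r, r' = r + 1 := ⟨r' - 1, by omega⟩
  have hur' : u ≤ r := by omega
  have hN1 : (1 : ℝ) ≤ N := by
    have : 1 ≤ N := by omega
    exact_mod_cast this
  rw [Finset.sum_Ico_succ_top hur', lp.coeFn_add, Pi.add_apply]
  set w := ∑ i ∈ Finset.Ico u r, x i with hw
  have hwfix : S.P n w = w := by
    rw [hw, map_sum]
    refine Finset.sum_congr rfl fun i hi => ?_
    rw [Finset.mem_Ico] at hi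
    exact hfix i n ((hqp i r hi.2).trans (hr3 r (by omega) hur'))
  obtain ⟨s1, s2, i, m, j, hs1, hs2, hm1, him, hform⟩ := BD_formula S n hn2 w hwfix k hk1 hk2
  obtain ⟨t, ht1, ht2, ht3, ht4⟩ := BD_cut p hpm m u r hur'
  have hwt : w = ∑ i ∈ Finset.Ico u t, x i + ∑ i ∈ Finset.Ico t r, x i :=
    (Finset.sum_Ico_consecutive _ ht1 ht2).symm
  have hwi : w i = (∑ l ∈ Finset.Ico u t, x l) i := by
    rw [hwt, lp.coeFn_add, Pi.add_apply, add_eq_left, BD_sum_apply]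
    refine Finset.sum_eq_zero fun l hl => ?_
    rw [Finset.mem_Ico] at hl
    exact hlow l m i him hm1 (ht4 l hl.1 hl.2).le
  have hPtail : S.P m (∑ i ∈ Finset.Ico t r, x i) = 0 := by
    rw [map_sum]
    refine Finset.sum_eq_zero fun l hl => ?_
    rw [Finset.mem_Ico] at hl
    exact BD_P_eq_zero S m hm1 _ fun k _ hk => hlow l m k hk hm1 (ht4 l hl.1 hl.2).le
  have htail := ih (r - t) (by omega) t j
  rw [show t + (r - t) = r by omega] at htail
  have hhead := ih (t - u) (by omega) u i
  rw [show u + (t - u) = t by omega] at hhead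
  have hdiff : |w j - S.P m w j| ≤ (1 + S.lam) * R + C * ((r - t : ℕ) : ℝ) ^ s := by
    have hPw : S.P m w = S.P m (∑ i ∈ Finset.Ico u t, x i) := by
      rw [hwt, map_add, hPtail, add_zero]
    have hu : ‖(∑ i ∈ Finset.Ico u t, x i) - S.P m (∑ i ∈ Finset.Ico u t, x i)‖
        ≤ (1 + S.lam) * R := by
      rcases Nat.eq_or_lt_of_le ht1 with rfl | hut
      · simp; positivity
      obtain ⟨t, rfl⟩ : ∃ t', t = t' + 1 := ⟨t - 1, by omega⟩
      have hut' : u ≤ t := by omega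
      have hfx : S.P m (∑ i ∈ Finset.Ico u t, x i) = ∑ i ∈ Finset.Ico u t, x i := by
        rw [map_sum]
        refine Finset.sum_congr rfl fun i hi => ?_
        rw [Finset.mem_Ico] at hi
        exact hfix i m ((hqp i t hi.2).trans (ht3 t (by omega) hut'))
      rw [Finset.sum_Ico_succ_top hut', map_add, hfx, add_sub_add_left_eq_sub]
      calc ‖x t - S.P m (x t)‖ ≤ ‖x t‖ + ‖S.P m (x t)‖ := norm_sub_le _ _
        _ ≤ ‖x t‖ + S.lam * ‖x t‖ := by
            gcongr
            exact (S.P m).le_of_opNorm_le (S.hPnorm m) _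
        _ = (1 + S.lam) * ‖x t‖ := by ring
        _ ≤ (1 + S.lam) * R := by gcongr; exact hB.hnorm t
    have e : w j - S.P m w j = ((∑ i ∈ Finset.Ico u t, x i)
        - S.P m (∑ i ∈ Finset.Ico u t, x i)) j + (∑ i ∈ Finset.Ico t r, x i) j := by
      rw [hPw, lp.coeFn_sub, Pi.sub_apply]
      conv_lhs => rw [hwt, lp.coeFn_add, Pi.add_apply]
      ring
    rw [e]
    refine (abs_add_le _ _).trans (add_le_add ((BD_coord_le _ j).trans hu) htail)
  have hwk : |w k| ≤ S.a * (C * ((t - u : ℕ) : ℝ) ^ s)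
      + S.b * ((1 + S.lam) * R + C * ((r - t : ℕ) : ℝ) ^ s) := by
    rw [hform]
    refine (abs_add_le _ _).trans (add_le_add ?_ ?_)
    · rw [abs_mul, abs_mul, hs1, mul_one, abs_of_pos ha0, hwi]
      gcongr
    · rw [abs_mul, abs_mul, hs2, mul_one, abs_of_pos hb0]
      gcongr
  have hHH := hH ((t - u : ℕ) : ℝ) ((r - t : ℕ) : ℝ) (Nat.cast_nonneg _) (Nat.cast_nonneg _)
  have hmono : (((t - u : ℕ) : ℝ) + ((r - t : ℕ) : ℝ)) ^ s ≤ (N : ℝ) ^ s := by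
    refine Real.rpow_le_rpow (by positivity) ?_ hs0.le
    have : (t - u) + (r - t) ≤ N := by omega
    exact_mod_cast this
  have hNs : 1 ≤ (N : ℝ) ^ s := Real.one_le_rpow hN1 hs0.le
  have hxr : |x r k| ≤ R := (BD_coord_le _ _).trans (hB.hnorm r)
  calc |w k + x r k| ≤ |w k| + |x r k| := abs_add_le _ _
    _ ≤ C * (S.a * ((t - u : ℕ) : ℝ) ^ s + S.b * ((r - t : ℕ) : ℝ) ^ s) + K := by
        rw [hK]; linarith
    _ ≤ C * (θ * (N : ℝ) ^ s) + K := by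
        gcongr
        exact hHH.trans (by gcongr)
    _ ≤ C * (θ * (N : ℝ) ^ s) + K * (N : ℝ) ^ s := by
        gcongr
        exact le_mul_of_one_le_right hK0 hNs
    _ = C * (N : ℝ) ^ s := by rw [hCK]; ring

theorem BD_P_mem (S : BDSetup) (q : ℕ) (hq : 1 ≤ q) (x : linf) : S.P q x ∈ Xsub S := by
  refine Submodule.le_topologicalClosure _ (Submodule.subset_span ?_)
  simp only [Set.mem_iUnion]
  refine ⟨q, hq, S.pi q x, BD_pi_mem S q x, ?_⟩
  exact BD_P_congr S q hq _ _ (BD_pi_self S q _ (BD_pi_mem S q x))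

theorem BD_approx (S : BDSetup) (y : linf) (hy : y ∈ Xsub S) (δ : ℝ) (hδ : 0 < δ) (q0 : ℕ) :
    ∃ q, q0 ≤ q ∧ ‖S.P q y - y‖ ≤ δ := by
  have hl := S.hlam
  have hspan : ∀ z ∈ Submodule.span ℝ (⋃ m ∈ {m : ℕ | 1 ≤ m}, (S.P m) '' (Esub S.d m)),
      ∃ q1, ∀ q, q1 ≤ q → S.P q z = z := by
    intro z hz
    induction hz using Submodule.span_induction with
    | mem z hz =>
      simp only [Set.mem_iUnion] at hz
      obtain ⟨m, hm, v, hv, rfl⟩ := hz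
      exact ⟨m, fun q hq => BD_P_P S m q hm hq v⟩
    | zero => exact ⟨0, fun q _ => map_zero _⟩
    | add z1 z2 _ _ h1 h2 =>
      obtain ⟨a1, h1⟩ := h1
      obtain ⟨a2, h2⟩ := h2
      refine ⟨max a1 a2, fun q hq => ?_⟩
      rw [map_add, h1 q (le_of_max_le_left hq), h2 q (le_of_max_le_right hq)]
    | smul c z _ h =>
      obtain ⟨a1, h1⟩ := h
      exact ⟨a1, fun q hq => by rw [map_smul, h1 q hq]⟩
  obtain ⟨z, hz, hdist⟩ := Metric.mem_closure_iff.1 hy (δ / (1 + S.lam)) (by positivity)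
  obtain ⟨q1, hq1⟩ := hspan z hz
  refine ⟨max q0 q1, le_max_left _ _, ?_⟩
  set q := max q0 q1
  rw [dist_eq_norm] at hdist
  calc ‖S.P q y - y‖ = ‖S.P q (y - z) - (y - z)‖ := by
        rw [map_sub, hq1 q (le_max_right _ _)]; congr 1; abel
    _ ≤ ‖S.P q (y - z)‖ + ‖y - z‖ := norm_sub_le _ _
    _ ≤ S.lam * ‖y - z‖ + ‖y - z‖ := by
        gcongr
        exact (S.P q).le_of_opNorm_le (S.hPnorm q) _
    _ = (1 + S.lam) * ‖y - z‖ := by ring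
    _ ≤ (1 + S.lam) * (δ / (1 + S.lam)) := by gcongr
    _ = δ := by field_simp

theorem BD_weakly_null (S : BDSetup) (y : ℕ → Xsub S)
    (hy : ∀ F : Xsub S →L[ℝ] ℝ, Tendsto (fun n => F (y n)) atTop (nhds (0 : ℝ)))
    (p : ℕ) (hp : 1 ≤ p) (δ : ℝ) (hδ : 0 < δ) :
    ∀ᶠ n in atTop, ‖S.P p (y n : linf)‖ ≤ δ := by
  have hl := S.hlam
  have hδ' : 0 < δ / S.lam := by positivity
  have h1 : ∀ k ∈ Finset.Icc 1 (S.d p), ∀ᶠ n in atTop, |(y n : linf) k| ≤ δ / S.lam := by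
    intro k _
    have h2 : Tendsto (fun n => (y n : linf) k) atTop (nhds (0 : ℝ)) := hy (Qe S k)
    have h3 := h2.abs
    rw [abs_zero] at h3
    exact h3.eventually_le_const hδ'
  rw [← Filter.eventually_all_finset] at h1
  filter_upwards [h1] with n hn
  have e : S.P p (y n : linf) = S.P p (S.pi p (y n : linf)) :=
    BD_P_congr S p hp _ _ (BD_pi_self S p _ (BD_pi_mem S p _)).symm
  have hpi : ‖S.pi p (y n : linf)‖ ≤ δ / S.lam := by
    refine lp.norm_le_of_forall_le hδ'.le fun k => ?_
    rw [S.hpi]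
    split_ifs with hk
    · exact hn k (Finset.mem_Icc.2 hk)
    · simpa using hδ'.le
  rw [e]
  calc ‖S.P p (S.pi p (y n : linf))‖ ≤ S.lam * ‖S.pi p (y n : linf)‖ :=
        (S.P p).le_of_opNorm_le (S.hPnorm p) _
    _ ≤ S.lam * (δ / S.lam) := by gcongr
    _ = δ := by field_simp

set_option maxHeartbeats 1000000 in
theorem BD_szlenk (S : BDSetup) (ε : ℝ) (hε : 0 < ε) (N : ℕ) :
    ∀ f ∈ SzlenkSet (Xsub S) ε {f : (Xsub S) →L[ℝ] ℝ | ‖f‖ ≤ 1} (N : Ordinal),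
    ∀ p0 : ℕ, 2 ≤ p0 → ∀ F : Finset (Xsub S), ∀ δ : ℝ, 0 < δ →
    ∃ (g : Xsub S →L[ℝ] ℝ) (x : ℕ → Xsub S) (p q : ℕ → ℕ), ‖g‖ ≤ 1 ∧
      BDBlocks S (1 + ε) p0 (fun i => (x i : linf)) p q ∧ (∀ i < N, ε / 4 ≤ g (x i)) ∧
      ∀ y ∈ F, |g y - f y| ≤ δ := by
  induction N with
  | zero =>
    intro f hf p0 hp0 F δ hδ
    have hf' : ‖f‖ ≤ 1 := by
      unfold SzlenkSet at hf
      rw [Nat.cast_zero] at hf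
      simpa using hf
    refine ⟨f, fun _ => 0, fun i => p0 + i, fun i => p0 + i + 1, hf', ?_, fun i hi => by omega,
      fun y _ => by simpa using hδ.le⟩
    exact ⟨by simp, fun i => by omega, fun i => by omega, fun i => by simp, fun i k _ => by simp,
      fun i => by simp; linarith⟩
  | succ N ih =>
    intro f hf p0 hp0 F δ hδ
    have hsucc : SzlenkSet (Xsub S) ε {f : (Xsub S) →L[ℝ] ℝ | ‖f‖ ≤ 1} ((N + 1 : ℕ) : Ordinal) =
      {b | b ∈ {f : (Xsub S) →L[ℝ] ℝ | ‖f‖ ≤ 1} ∧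
        ∃ (a : ℕ → Xsub S) (bs : ℕ → Xsub S →L[ℝ] ℝ),
      (∀ n, ‖a n‖ ≤ 1) ∧
      (∀ F : Xsub S →L[ℝ] ℝ, Filter.Tendsto (fun n => F (a n)) Filter.atTop (nhds (0 : ℝ))) ∧
      (∀ n, bs n ∈ SzlenkSet (Xsub S) ε {f : (Xsub S) →L[ℝ] ℝ | ‖f‖ ≤ 1} (N : Ordinal)) ∧
      (∀ y : Xsub S, Filter.Tendsto (fun n => bs n y) Filter.atTop (nhds (b y))) ∧
      (∃ L : ℝ, ε ≤ L ∧ Filter.Tendsto (fun n => bs n (a n)) Filter.atTop (nhds L))} := by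
      unfold SzlenkSet
      rw [Nat.cast_succ, Ordinal.limitRecOn_add_one]
    rw [hsucc] at hf
    obtain ⟨-, a, bs, ha1, hanull, hbs, hlim, L, hL, hLlim⟩ := hf
    have hF : ∀ᶠ n in atTop, ∀ y ∈ F, |bs n y - f y| ≤ δ / 2 := by
      rw [Filter.eventually_all_finset]
      intro y _
      have h3 : Tendsto (fun n => |bs n y - f y|) atTop (nhds 0) :=
        tendsto_iff_dist_tendsto_zero.1 (hlim y)
      exact h3.eventually_le_const (by positivity)
    have hLe : ∀ᶠ n in atTop, 3 * ε / 4 ≤ bs n (a n) :=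
      hLlim.eventually_const_le (by linarith)
    obtain ⟨n, hn1, hn2, hn3⟩ := (hF.and (hLe.and
      (BD_weakly_null S a hanull p0 (by omega) (ε / 8) (by positivity)))).exists
    obtain ⟨q, hq, hq2⟩ := BD_approx S (a n : linf) (a n).2 (ε / 8) (by positivity) (p0 + 1)
    have hsub : S.P q (a n : linf) - S.P p0 (a n : linf) ∈ Xsub S :=
      Submodule.sub_mem _ (BD_P_mem S q (by omega) _) (BD_P_mem S p0 (by omega) _)
    set z : Xsub S := ⟨_, hsub⟩ with hz
    have hzc : (z : linf) = S.P q (a n : linf) - S.P p0 (a n : linf) := rfl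
    have hza : ‖z - a n‖ ≤ ε / 4 := by
      have : ‖z - a n‖ = ‖(S.P q (a n : linf) - (a n : linf)) - S.P p0 (a n : linf)‖ := by
        rw [Submodule.coe_norm, Submodule.coe_sub, hzc, sub_right_comm]
      rw [this]
      refine (norm_sub_le _ _).trans ?_
      linarith
    have hbn : ‖bs n‖ ≤ 1 := by
      obtain ⟨_⟩ | N := N
      · have := hbs n
        unfold SzlenkSet at this
        rw [Nat.cast_zero] at this
        simpa using this
      · have := hbs n
        unfold SzlenkSet at this
        rw [Nat.cast_succ, Ordinal.limitRecOn_add_one] at this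
        exact this.1
    have hbz : ε / 2 ≤ bs n z := by
      have h1 : |bs n (z - a n)| ≤ ε / 4 := by
        calc |bs n (z - a n)| ≤ 1 * ‖z - a n‖ := (bs n).le_of_opNorm_le hbn _
          _ ≤ ε / 4 := by linarith
      rw [map_sub] at h1
      have := (abs_le.1 h1).1
      linarith
    have hznorm : ‖(z : linf)‖ ≤ 1 + ε := by
      change ‖z‖ ≤ 1 + ε
      have h1 : ‖z‖ ≤ ‖a n‖ + ‖z - a n‖ := norm_le_norm_add_norm_sub' z (a n)
      have h2 := ha1 n
      linarith
    obtain ⟨g, x, p, q', hg, hblk, hge, hclose⟩ :=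
      ih (bs n) (hbs n) q (by omega) (insert z F) (min (δ / 2) (ε / 4)) (by positivity)
    refine ⟨g, fun i => Nat.casesOn i z x, fun i => Nat.casesOn i p0 p,
      fun i => Nat.casesOn i q q', hg, ?_, ?_, ?_⟩
    · refine ⟨le_rfl, ?_, ?_, ?_, ?_, ?_⟩
      · rintro (_ | i)
        · exact hq
        · exact hblk.hpq i
      · rintro (_ | i)
        · exact hblk.h0
        · exact hblk.hqp i
      · rintro (_ | i)
        · change S.P q (z : linf) = z
          rw [hzc, map_sub, BD_P_P S q q (by omega) le_rfl, BD_P_P S p0 q (by omega) (by omega)]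
        · exact hblk.hP i
      · rintro (_ | i)
        · intro k hk
          change k ≤ S.d p0 at hk
          change (z : linf) k = 0
          rw [hzc, lp.coeFn_sub, Pi.sub_apply]
          rcases Nat.eq_zero_or_pos k with rfl | hk0
          · rw [BD_P_at_zero S q (by omega), BD_P_at_zero S p0 (by omega), _root_.sub_self]
          · rw [BD_P_low S p0 (by omega) _ k hk0 hk, BD_P_low S q (by omega) _ k hk0
              (hk.trans (BD_d_mono S (by omega) (by omega))), _root_.sub_self]
        · exact hblk.hlow i
      · rintro (_ | i)
        · exact hznorm
        · exact hblk.hnorm i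
    · rintro (_ | i) hi
      · change ε / 4 ≤ g z
        have h1 := (hclose z (Finset.mem_insert_self _ _)).trans (min_le_right _ _)
        have := (abs_le.1 h1).1
        linarith
      · exact hge i (by omega)
    · intro y hy
      have h1 := (hclose y (Finset.mem_insert_of_mem hy)).trans (min_le_left _ _)
      have h2 := hn1 y hy
      calc |g y - f y| ≤ |g y - bs n y| + |bs n y - f y| := abs_sub_le _ _ _
        _ ≤ δ := by linarith

/-- for every `ε > 0` the ε-Szlenk index of the unit ball of `X^*` is
finite. -/
theorem stmt_17 (S : BDSetup) (ε : ℝ) (hε : 0 < ε) :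
    ∃ n : ℕ,
      SzlenkSet (Xsub S) ε {f : (Xsub S) →L[ℝ] ℝ | ‖f‖ ≤ 1} (n : Ordinal) = ∅ := by
  obtain ⟨s, C, hs0, hs1, hC, hest⟩ := BD_estimate S (1 + ε) (by linarith)
  obtain ⟨N, hN1, hN⟩ : ∃ N : ℕ, 1 ≤ N ∧ C * (N : ℝ) ^ s < N * (ε / 4) := by
    have h1 : Tendsto (fun N : ℕ => (N : ℝ) ^ (1 - s)) atTop atTop :=
      (tendsto_rpow_atTop (by linarith)).comp tendsto_natCast_atTop_atTop
    obtain ⟨N, h2, h3⟩ := ((h1.eventually_gt_atTop (C / (ε / 4))).and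
      (eventually_ge_atTop 1)).exists
    refine ⟨N, h3, ?_⟩
    have hN0 : (0 : ℝ) < N := by exact_mod_cast h3
    have h4 : (N : ℝ) = (N : ℝ) ^ (1 - s) * (N : ℝ) ^ s := by
      rw [← Real.rpow_add hN0, sub_add_cancel, Real.rpow_one]
    rw [div_lt_iff₀ (by positivity)] at h2
    have h5 : 0 < (N : ℝ) ^ s := by positivity
    calc C * (N : ℝ) ^ s < ((N : ℝ) ^ (1 - s) * (ε / 4)) * (N : ℝ) ^ s := by gcongr
      _ = ((N : ℝ) ^ (1 - s) * (N : ℝ) ^ s) * (ε / 4) := by ring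
      _ = N * (ε / 4) := by rw [← h4]
  refine ⟨N, Set.eq_empty_iff_forall_notMem.2 fun f hf => ?_⟩
  obtain ⟨g, x, p, q, hg, hblk, hge, -⟩ :=
    BD_szlenk S ε hε N f hf 2 le_rfl ∅ 1 one_pos
  have hnorm : ‖∑ i ∈ Finset.Ico 0 (0 + N), x i‖ ≤ C * (N : ℝ) ^ s := by
    rw [Submodule.coe_norm, Submodule.coe_sum]
    refine lp.norm_le_of_forall_le (by positivity) fun k => ?_
    exact hest _ p q hblk N 0 k
  have h1 : N * (ε / 4) ≤ g (∑ i ∈ Finset.Ico 0 (0 + N), x i) := by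
    rw [map_sum]
    have := Finset.card_nsmul_le_sum (Finset.Ico 0 (0 + N)) (fun i => g (x i)) (ε / 4)
      (fun i hi => hge i (by simpa using hi))
    simpa using this
  have h2 : g (∑ i ∈ Finset.Ico 0 (0 + N), x i) ≤ 1 * ‖∑ i ∈ Finset.Ico 0 (0 + N), x i‖ :=
    (le_abs_self _).trans (g.le_of_opNorm_le hg _)
  linarith
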